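/- arXiv:1403.3678 — 8 statements merged into one kernel-verified Lean document; each statement's English description precedes it below -/
import Mathlib

section
/- Let μ be a symmetric probability measure on ℝ and K > 0. Then the symmetrically saturated measure ⌊μ⌋_K^s is again a symmetric probability measure on ℝ. -/
open MeasureTheory Real

/-- A probability measure on ℝ is *symmetric* if the pushforward under negation
equals the measure with density `x ↦ e^{-x}` with respect to it. -/
def IsSymmetricMeasure (μ : Measure ℝ) : Prop :=
  μ.map (fun x => -x) = μ.withDensity (fun x => ENNReal.ofReal (Real.exp (-x)))

/-- The symmetrically saturated measure `⌊μ⌋_K^s`: the restriction of `μ` to `(-K, K)`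
plus `γ·p·δ_{-K} + γ·(1-p)·δ_K`, where `γ = μ {x : |x| ≥ K}` and
`p = e^{-K}/(1+e^{-K})`. -/
noncomputable def symSat (μ : Measure ℝ) (K : ℝ) : Measure ℝ :=
  μ.restrict (Set.Ioo (-K) K)
    + (μ {x : ℝ | K ≤ |x|} * ENNReal.ofReal (Real.exp (-K) / (1 + Real.exp (-K))))
        • Measure.dirac (-K)
    + (μ {x : ℝ | K ≤ |x|} * ENNReal.ofReal (1 - Real.exp (-K) / (1 + Real.exp (-K))))
        • Measure.dirac K

/-- Symmetric saturation of a symmetric probability measure is again a symmetric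
probability measure. -/
theorem symSat_isProbability_and_symmetric (μ : Measure ℝ) [IsProbabilityMeasure μ]
    (hsym : IsSymmetricMeasure μ) (K : ℝ) (hK : 0 < K) :
    IsProbabilityMeasure (symSat μ K) ∧ IsSymmetricMeasure (symSat μ K) := by
  set p : ℝ := Real.exp (-K) / (1 + Real.exp (-K)) with hp
  have he : 0 < Real.exp (-K) := Real.exp_pos _
  have hp0 : 0 ≤ p := by positivity
  have hp1 : 1 - p = 1 / (1 + Real.exp (-K)) := by rw [hp]; field_simp; ring
  have hp1' : 0 ≤ 1 - p := by rw [hp1]; positivity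
  have h1 : p * Real.exp K = 1 - p := by
    rw [hp1, hp, div_mul_eq_mul_div, ← Real.exp_add]; simp
  have h2 : (1 - p) * Real.exp (-K) = p := by
    rw [hp1, hp]; ring
  have hmeas : Measurable (fun x : ℝ => ENNReal.ofReal (Real.exp (-x))) := by fun_prop
  constructor
  · constructor
    have hc : {x : ℝ | K ≤ |x|} = (Set.Ioo (-K) K)ᶜ := by
      ext x
      simp only [Set.mem_setOf_eq, Set.mem_compl_iff, Set.mem_Ioo, ← abs_lt, not_lt]
    simp only [symSat, ← hp, Measure.add_apply, Measure.smul_apply, smul_eq_mul, measure_univ,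
      mul_one, Measure.restrict_apply_univ]
    rw [add_assoc, ← mul_add, ← ENNReal.ofReal_add hp0 hp1', add_sub_cancel, ENNReal.ofReal_one,
      mul_one, hc, measure_add_measure_compl measurableSet_Ioo, measure_univ]
  · have hd : ∀ a : ℝ, (Measure.dirac a).withDensity (fun x => ENNReal.ofReal (Real.exp (-x)))
        = ENNReal.ofReal (Real.exp (-a)) • Measure.dirac a := by
      intro a
      ext s hs
      rw [withDensity_apply _ hs, ← lintegral_indicator hs, lintegral_dirac' _ (hmeas.indicator hs)]
      by_cases ha : a ∈ s <;> simp [ha, hs]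
    unfold IsSymmetricMeasure at hsym ⊢
    have hr : (μ.restrict (Set.Ioo (-K) K)).map (fun x => -x)
        = (μ.restrict (Set.Ioo (-K) K)).withDensity
          (fun x => ENNReal.ofReal (Real.exp (-x))) := by
      rw [← restrict_withDensity measurableSet_Ioo, ← hsym,
        Measure.restrict_map measurable_neg measurableSet_Ioo]
      congr 2
      ext x
      simp only [Set.mem_preimage, Set.mem_Ioo]
      constructor <;> rintro ⟨h, h'⟩ <;> constructor <;> linarith
    simp only [symSat, ← hp]
    rw [Measure.map_add _ _ measurable_neg, Measure.map_add _ _ measurable_neg,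
      Measure.map_smul, Measure.map_smul, Measure.map_dirac' measurable_neg,
      Measure.map_dirac' measurable_neg, withDensity_add_measure, withDensity_add_measure,
      withDensity_smul_measure, withDensity_smul_measure, hd, hd, hr, neg_neg, smul_smul,
      smul_smul, mul_assoc, mul_assoc, ← ENNReal.ofReal_mul hp0, ← ENNReal.ofReal_mul hp1', h1, h2]
    rw [add_assoc, add_assoc]
    congr 1
    exact add_comm _ _
end

section
/- Let μ be a symmetric probability measure on ℝ and K > 0. Then the Wasserstein distance between μ and its symmetric saturation satisfies d(μ, ⌊μ⌋_K^s) = ∫₀¹ |F_μ(t) − F_{⌊μ⌋_K^s}(t)| dt ≤ 1 − tanh(K/2). -/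
open MeasureTheory Real

/-- The `|D|`-distribution of a probability measure `ν` on ℝ:
`F_ν(t) = ν({x : |tanh(x/2)| ≤ t})`, as a real number. -/
noncomputable def absDdist (ν : Measure ℝ) (t : ℝ) : ℝ :=
  (ν {x : ℝ | |Real.tanh (x / 2)| ≤ t}).toReal

/-- The Wasserstein distance between two probability measures on ℝ:
the `L¹` distance between their `|D|`-distributions on `[0,1]`. -/
noncomputable def wassersteinDist (μ ν : Measure ℝ) : ℝ :=
  ∫ t in (0:ℝ)..1, |absDdist μ t - absDdist ν t|

theorem aux_symSat_univ (μ : Measure ℝ) [IsProbabilityMeasure μ] (K : ℝ) :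
    symSat μ K Set.univ = 1 := by
  have hp0 : 0 ≤ Real.exp (-K) / (1 + Real.exp (-K)) := by positivity
  have hp1 : Real.exp (-K) / (1 + Real.exp (-K)) ≤ 1 := by
    rw [div_le_one (by positivity)]; linarith
  have hc : {x : ℝ | K ≤ |x|} = (Set.Ioo (-K) K)ᶜ := by
    ext x
    simp only [Set.mem_setOf_eq, Set.mem_compl_iff, Set.mem_Ioo, ← abs_lt, not_lt]
  simp only [symSat, Measure.add_apply, Measure.smul_apply, smul_eq_mul, measure_univ, mul_one,
    Measure.restrict_apply_univ]
  rw [add_assoc, ← mul_add, ← ENNReal.ofReal_add hp0 (by linarith), add_sub_cancel,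
    ENNReal.ofReal_one, mul_one, hc, measure_add_measure_compl measurableSet_Ioo, measure_univ]

theorem aux_tanh_mono {a b : ℝ} (h : a ≤ b) : Real.tanh a ≤ Real.tanh b := by
  rw [Real.tanh_eq_sinh_div_cosh, Real.tanh_eq_sinh_div_cosh,
    div_le_div_iff₀ (Real.cosh_pos _) (Real.cosh_pos _)]
  have h1 := Real.sinh_sub b a
  have h2 : 0 ≤ Real.sinh (b - a) := Real.sinh_nonneg_iff.2 (by linarith)
  nlinarith

theorem aux_absD_eq (μ : Measure ℝ) (K : ℝ) (hK : 0 < K) (t : ℝ)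
    (ht : t < Real.tanh (K / 2)) : absDdist μ t = absDdist (symSat μ K) t := by
  have hm : MeasurableSet {x : ℝ | |Real.tanh (x / 2)| ≤ t} := by
    have : Measurable Real.tanh := by
      have : Real.tanh = fun x => Real.sinh x / Real.cosh x :=
        funext Real.tanh_eq_sinh_div_cosh
      rw [this]; fun_prop
    exact measurableSet_le (by fun_prop) measurable_const
  have hs : {x : ℝ | |Real.tanh (x / 2)| ≤ t} ⊆ Set.Ioo (-K) K := by
    intro x hx
    simp only [Set.mem_setOf_eq, abs_le] at hx
    constructor
    · by_contra h
      have := aux_tanh_mono (a := x / 2) (b := -(K / 2)) (by linarith)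
      rw [Real.tanh_neg] at this
      linarith
    · by_contra h
      have := aux_tanh_mono (a := K / 2) (b := x / 2) (by linarith)
      linarith
  have h1 : K ∉ {x : ℝ | |Real.tanh (x / 2)| ≤ t} := fun h => by simpa using hs h
  have h2 : -K ∉ {x : ℝ | |Real.tanh (x / 2)| ≤ t} := fun h => by simpa using hs h
  unfold absDdist
  congr 1
  simp only [symSat, Measure.add_apply, Measure.smul_apply, smul_eq_mul,
    Measure.dirac_apply' _ hm, Set.indicator_of_notMem h1, Set.indicator_of_notMem h2,
    mul_zero, add_zero]
  rw [Measure.restrict_apply hm, Set.inter_eq_left.2 hs]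

/-- The Wasserstein distance between a symmetric probability measure and its symmetric
saturation is at most `1 - tanh(K/2)`. -/
theorem wasserstein_symSat_le (μ : Measure ℝ) [IsProbabilityMeasure μ]
    (hsym : IsSymmetricMeasure μ) (K : ℝ) (hK : 0 < K) :
    wassersteinDist μ (symSat μ K) ≤ 1 - Real.tanh (K / 2) := by
  haveI : IsProbabilityMeasure (symSat μ K) := ⟨aux_symSat_univ μ K⟩
  have hT0 : 0 ≤ Real.tanh (K / 2) := by
    have := aux_tanh_mono (a := 0) (b := K / 2) (by linarith)
    simpa using this
  have hT1 : Real.tanh (K / 2) ≤ 1 := by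
    rw [Real.tanh_eq_sinh_div_cosh, div_le_one (Real.cosh_pos _)]
    exact (Real.sinh_lt_cosh _).le
  have hF : ∀ (ν : Measure ℝ) [IsProbabilityMeasure ν] (t : ℝ),
      0 ≤ absDdist ν t ∧ absDdist ν t ≤ 1 := fun ν _ t =>
    ⟨ENNReal.toReal_nonneg, measureReal_le_one⟩
  unfold wassersteinDist
  rw [intervalIntegral.integral_of_le zero_le_one]
  calc ∫ t in Set.Ioc (0:ℝ) 1, |absDdist μ t - absDdist (symSat μ K) t|
      ≤ ∫ t in Set.Ioc (0:ℝ) 1, (Set.Icc (Real.tanh (K / 2)) 1).indicator (fun _ => (1:ℝ)) t := by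
        apply integral_mono_of_nonneg
        · exact Filter.Eventually.of_forall fun t => abs_nonneg _
        · exact (integrable_const (1:ℝ)).indicator measurableSet_Icc
        · refine (ae_restrict_iff' measurableSet_Ioc).2 (Filter.Eventually.of_forall fun t ht => ?_)
          by_cases h : t < Real.tanh (K / 2)
          · simp only [aux_absD_eq μ K hK t h, sub_self, abs_zero]
            exact Set.indicator_nonneg (fun _ _ => zero_le_one) _
          · have hm : t ∈ Set.Icc (Real.tanh (K / 2)) 1 := ⟨not_lt.1 h, ht.2⟩
            simp only [Set.indicator_of_mem hm]
            have a := hF μ t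
            have b := hF (symSat μ K) t
            exact abs_le.2 ⟨by linarith, by linarith⟩
    _ ≤ 1 - Real.tanh (K / 2) := by
        rw [integral_indicator measurableSet_Icc, Measure.restrict_restrict measurableSet_Icc]
        rw [setIntegral_const, smul_eq_mul, mul_one]
        calc volume.real (Set.Icc (Real.tanh (K / 2)) 1 ∩ Set.Ioc 0 1)
            ≤ volume.real (Set.Icc (Real.tanh (K / 2)) 1) :=
              measureReal_mono Set.inter_subset_left (by simp)
          _ = _ := by rw [Real.volume_real_Icc_of_le hT1]
end

section
/- For all real numbers x and y, letting f(x,y) = 2·artanh(tanh(x/2)·tanh(y/2)) denote the belief-propagation check-node combination, one has e^{−f(x,y)/2} ≤ e^{−x/2} + e^{−y/2}. -/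
open Real

/-- The inverse hyperbolic tangent, `artanh x = (1/2)·log((1+x)/(1-x))`. -/
noncomputable def artanh (x : ℝ) : ℝ := (1 / 2) * Real.log ((1 + x) / (1 - x))

lemma tanh_half_aux (x : ℝ) : Real.tanh (x / 2) =
    (1 - Real.exp (-x / 2) ^ 2) / (1 + Real.exp (-x / 2) ^ 2) := by
  have h : Real.exp (x / 2) * Real.exp (-x / 2) = 1 := by
    rw [← Real.exp_add]; ring_nf; exact Real.exp_zero
  have ha := Real.exp_pos (-x / 2)
  have hp := Real.exp_pos (x / 2)
  rw [Real.tanh_eq_sinh_div_cosh, Real.sinh_eq, Real.cosh_eq, ← neg_div]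
  rw [div_div_div_cancel_right₀ (by norm_num), div_eq_div_iff (by positivity) (by positivity)]
  linear_combination (2 * Real.exp (-x / 2)) * h

/-- For the belief-propagation check-node combination
`f(x,y) = 2·artanh(tanh(x/2)·tanh(y/2))`, one has
`e^{-f(x,y)/2} ≤ e^{-x/2} + e^{-y/2}`. -/
theorem battacharyya_checknode_pointwise (x y : ℝ) :
    Real.exp (-(2 * _root_.artanh (Real.tanh (x / 2) * Real.tanh (y / 2))) / 2)
      ≤ Real.exp (-x / 2) + Real.exp (-y / 2) := by
  rw [tanh_half_aux, tanh_half_aux]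
  have ha := Real.exp_pos (-x / 2)
  have hb := Real.exp_pos (-y / 2)
  generalize Real.exp (-x / 2) = a at *
  generalize Real.exp (-y / 2) = b at *
  have hr : (1 + (1 - a ^ 2) / (1 + a ^ 2) * ((1 - b ^ 2) / (1 + b ^ 2))) /
      (1 - (1 - a ^ 2) / (1 + a ^ 2) * ((1 - b ^ 2) / (1 + b ^ 2)))
      = (1 + a ^ 2 * b ^ 2) / (a ^ 2 + b ^ 2) := by
    have h1 : 1 + (1 - a ^ 2) / (1 + a ^ 2) * ((1 - b ^ 2) / (1 + b ^ 2))
        = 2 * (1 + a ^ 2 * b ^ 2) / ((1 + a ^ 2) * (1 + b ^ 2)) := by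
      field_simp; ring
    have h2 : 1 - (1 - a ^ 2) / (1 + a ^ 2) * ((1 - b ^ 2) / (1 + b ^ 2))
        = 2 * (a ^ 2 + b ^ 2) / ((1 + a ^ 2) * (1 + b ^ 2)) := by
      field_simp; ring
    rw [h1, h2]; field_simp
  unfold _root_.artanh
  rw [hr]
  have hpos : 0 < (1 + a ^ 2 * b ^ 2) / (a ^ 2 + b ^ 2) := by positivity
  refine (sq_le_sq₀ (Real.exp_pos _).le (by positivity)).1 ?_
  rw [← Real.exp_nat_mul]
  have he : ((2 : ℕ) : ℝ) * (-(2 * (1 / 2 * Real.log ((1 + a ^ 2 * b ^ 2) / (a ^ 2 + b ^ 2)))) / 2)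
      = -Real.log ((1 + a ^ 2 * b ^ 2) / (a ^ 2 + b ^ 2)) := by
    push_cast; ring
  rw [he, Real.exp_neg, Real.exp_log hpos, inv_div, div_le_iff₀ (by positivity)]
  have : 0 ≤ (a + b) ^ 2 * (a ^ 2 * b ^ 2) := by positivity
  nlinarith [mul_pos ha hb]
end

section
/- Let μ be a probability measure on ℝ and K > 0. Then the Battacharyya parameter of the saturated measure satisfies B(⌊μ⌋_K) ≤ B(μ) + e^{−K/2}. -/
open MeasureTheory Real

/-- The Battacharyya parameter of a probability measure on ℝ:
`B(μ) = ∫ e^{-x/2} dμ(x)`, a value in `[0, ∞]`. -/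
noncomputable def battacharyya (μ : Measure ℝ) : ENNReal :=
  ∫⁻ x, ENNReal.ofReal (Real.exp (-x / 2)) ∂μ

/-- The saturation map `⌊x⌋_K = sgn(x)·min(K,|x|)`. -/
noncomputable def satMap (K x : ℝ) : ℝ := Real.sign x * min K |x|

/-- The saturated measure `⌊μ⌋_K`: pushforward of `μ` under the saturation map. -/
noncomputable def satMeasure (μ : Measure ℝ) (K : ℝ) : Measure ℝ := μ.map (satMap K)

/-- The Battacharyya parameter of the saturated measure satisfies
`B(⌊μ⌋_K) ≤ B(μ) + e^{-K/2}`. -/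
theorem battacharyya_satMeasure_le (μ : Measure ℝ) [IsProbabilityMeasure μ]
    (K : ℝ) (hK : 0 < K) :
    battacharyya (satMeasure μ K) ≤ battacharyya μ + ENNReal.ofReal (Real.exp (-K / 2)) := by
  unfold battacharyya satMeasure
  refine (lintegral_map_le _ _).trans ?_
  have hc : ENNReal.ofReal (Real.exp (-K / 2))
      = ∫⁻ _ : ℝ, ENNReal.ofReal (Real.exp (-K / 2)) ∂μ := by simp
  rw [hc, ← lintegral_add_right _ measurable_const]
  refine lintegral_mono fun x => ?_
  have hs : x ≤ satMap K x ∨ K ≤ satMap K x := by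
    unfold satMap
    rcases lt_trichotomy x 0 with h | h | h
    · left
      rw [Real.sign_of_neg h, abs_of_neg h]
      linarith [min_le_right K (-x)]
    · left
      simp [h]
    · rw [Real.sign_of_pos h, abs_of_pos h, one_mul]
      rcases le_total K x with h' | h'
      · right
        simp [h']
      · left
        simp [h']
  rcases hs with h | h
  · refine le_trans (ENNReal.ofReal_le_ofReal (Real.exp_le_exp.2 ?_)) le_self_add
    linarith
  · refine le_trans (ENNReal.ofReal_le_ofReal (Real.exp_le_exp.2 ?_)) le_add_self
    linarith
end

section
/- Let λ₂ ∈ [0,1], let C ≥ 0 and ρ ≥ 0 and K > 0, and write ε = e^{−K/2}. Suppose ξ > 0 satisfies η := λ₂·C·ρ + (1−λ₂)·C·ρ²·ξ < 1 and ξ ≥ ((2−η)/(1−η))·ε. Let (B_n)_{n≥0} be a sequence of nonnegative reals with B₀ ≤ ξ and B_{n+1} ≤ λ₂·C·ρ·B_n + (1−λ₂)·C·ρ²·B_n² + ε for all n. Then for every n, B_n ≤ ξ and B_n ≤ η^n·ξ + ε/(1−η); in particular limsup_n B_n ≤ e^{−K/2}/(1−η). -/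
open Real Filter

/-- Near-stability recursion for the Battacharyya parameters of the saturated BP decoder
with minimum variable degree two.  With `ε = e^{-K/2}`,
`η = λ₂·C·ρ + (1-λ₂)·C·ρ²·ξ < 1` and `ξ ≥ ((2-η)/(1-η))·ε`, any nonnegative sequence with
`B₀ ≤ ξ` and `B_{n+1} ≤ λ₂·C·ρ·B_n + (1-λ₂)·C·ρ²·B_n² + ε` stays below `ξ`, satisfies
`B_n ≤ η^n·ξ + ε/(1-η)`, and has `limsup B_n ≤ e^{-K/2}/(1-η)`. -/
theorem near_stability_degree_two (lam2 C ρ K ξ η : ℝ)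
    (hlam2 : lam2 ∈ Set.Icc (0 : ℝ) 1) (hC : 0 ≤ C) (hρ : 0 ≤ ρ) (hK : 0 < K)
    (hξpos : 0 < ξ)
    (hη : η = lam2 * C * ρ + (1 - lam2) * C * ρ ^ 2 * ξ) (hηlt : η < 1)
    (hξ : ξ ≥ ((2 - η) / (1 - η)) * Real.exp (-K / 2))
    (B : ℕ → ℝ) (hBnn : ∀ n, 0 ≤ B n) (hB0 : B 0 ≤ ξ)
    (hrec : ∀ n, B (n + 1) ≤
      lam2 * C * ρ * B n + (1 - lam2) * C * ρ ^ 2 * (B n) ^ 2 + Real.exp (-K / 2)) :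
    (∀ n, B n ≤ ξ ∧ B n ≤ η ^ n * ξ + Real.exp (-K / 2) / (1 - η)) ∧
      limsup B atTop ≤ Real.exp (-K / 2) / (1 - η) := by
  obtain ⟨hl0, hl1⟩ := hlam2
  have he : 0 < Real.exp (-K / 2) := Real.exp_pos _
  generalize Real.exp (-K / 2) = e at *
  have hd : 0 < 1 - η := by linarith
  have hb : 0 ≤ (1 - lam2) * C * ρ ^ 2 := by
    have : 0 ≤ 1 - lam2 := by linarith
    positivity
  have ha : 0 ≤ lam2 * C * ρ := by positivity
  generalize (1 - lam2) * C * ρ ^ 2 = b at *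
  generalize lam2 * C * ρ = a at *
  have hη0 : 0 ≤ η := by rw [hη]; positivity
  have h1 : (2 - η) * e ≤ (1 - η) * ξ := by
    have h := mul_le_mul_of_nonneg_left hξ hd.le
    have h2 : (1 - η) * ((2 - η) / (1 - η) * e) = (2 - η) * e := by
      field_simp
    linarith
  have h3 : e ≤ (1 - η) * ξ := by nlinarith
  have step : ∀ n, B n ≤ ξ → B (n + 1) ≤ η * B n + e := by
    intro n hn
    have h := hrec n
    have h4 : b * (B n) ^ 2 ≤ b * (ξ * B n) := by
      apply mul_le_mul_of_nonneg_left _ hb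
      nlinarith [hBnn n]
    rw [hη]
    linarith
  have main : ∀ n, B n ≤ ξ ∧ B n ≤ η ^ n * ξ + e / (1 - η) := by
    intro n
    induction n with
    | zero =>
      have : 0 ≤ e / (1 - η) := by positivity
      exact ⟨hB0, by simp; linarith⟩
    | succ n ih =>
      obtain ⟨i1, i2⟩ := ih
      have h := step n i1
      refine ⟨by linarith [mul_le_mul_of_nonneg_left i1 hη0], ?_⟩
      have h5 := mul_le_mul_of_nonneg_left i2 hη0
      have h6 : η * (η ^ n * ξ + e / (1 - η)) + e = η ^ (n + 1) * ξ + e / (1 - η) := by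
        field_simp
        ring
      linarith
  refine ⟨main, ?_⟩
  have ht : Tendsto (fun n : ℕ => η ^ n * ξ + e / (1 - η)) atTop (nhds (e / (1 - η))) := by
    simpa using ((tendsto_pow_atTop_nhds_zero_of_lt_one hη0 hηlt).mul_const ξ).add_const
      (e / (1 - η))
  rw [← ht.limsup_eq]
  exact limsup_le_limsup (Eventually.of_forall fun n => (main n).2)
    (isBoundedUnder_of ⟨0, hBnn⟩ : IsBoundedUnder (· ≥ ·) atTop B).isCoboundedUnder_le
    ht.isBoundedUnder_le
end

section
/- Let λ₃ ∈ [0,1], let C ≥ 0 and ρ ≥ 0 and K > 0, and write ε = e^{−K/2}. Suppose ξ > 0 satisfies λ₃·C·ρ²·ξ + (1−λ₃)·C·ρ³·ξ² = 1/2 and 2ε < ξ. Let (B_n)_{n≥0} be a sequence of nonnegative reals with B₀ ≤ ξ and B_{n+1} ≤ λ₃·C·ρ²·B_n² + (1−λ₃)·C·ρ³·B_n³ + ε for all n. Then for every n, B_n ≤ ξ and B_n ≤ 2ε + 2^{−n}·ξ; in particular limsup_n B_n ≤ 2·e^{−K/2}. -/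
open Real Filter

/-- Near-stability recursion for the Battacharyya parameters of the saturated BP decoder
with minimum variable degree three.  With `ε = e^{-K/2}`, `ξ > 0` the positive solution of
`λ₃·C·ρ²·ξ + (1-λ₃)·C·ρ³·ξ² = 1/2` and `2ε < ξ`, any nonnegative sequence with `B₀ ≤ ξ`
and `B_{n+1} ≤ λ₃·C·ρ²·B_n² + (1-λ₃)·C·ρ³·B_n³ + ε` stays below `ξ`, satisfies
`B_n ≤ 2ε + 2^{-n}·ξ`, and has `limsup B_n ≤ 2·e^{-K/2}`. -/
theorem near_stability_degree_three (lam3 C ρ K ξ : ℝ)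
    (hlam3 : lam3 ∈ Set.Icc (0 : ℝ) 1) (hC : 0 ≤ C) (hρ : 0 ≤ ρ) (hK : 0 < K)
    (hξpos : 0 < ξ)
    (hξeq : lam3 * C * ρ ^ 2 * ξ + (1 - lam3) * C * ρ ^ 3 * ξ ^ 2 = 1 / 2)
    (hξ : 2 * Real.exp (-K / 2) < ξ)
    (B : ℕ → ℝ) (hBnn : ∀ n, 0 ≤ B n) (hB0 : B 0 ≤ ξ)
    (hrec : ∀ n, B (n + 1) ≤
      lam3 * C * ρ ^ 2 * (B n) ^ 2 + (1 - lam3) * C * ρ ^ 3 * (B n) ^ 3 + Real.exp (-K / 2)) :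
    (∀ n, B n ≤ ξ ∧ B n ≤ 2 * Real.exp (-K / 2) + (1 / 2) ^ n * ξ) ∧
      limsup B atTop ≤ 2 * Real.exp (-K / 2) := by
  have he := Real.exp_pos (-K / 2)
  generalize Real.exp (-K / 2) = e at *
  obtain ⟨h0, h1⟩ := hlam3
  have ha : 0 ≤ lam3 * C * ρ ^ 2 := by positivity
  have hb : 0 ≤ (1 - lam3) * C * ρ ^ 3 := by
    have : 0 ≤ 1 - lam3 := by linarith
    positivity
  generalize lam3 * C * ρ ^ 2 = a at *
  generalize (1 - lam3) * C * ρ ^ 3 = b at *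
  have step : ∀ n, B n ≤ ξ → B (n + 1) ≤ B n / 2 + e := by
    intro n hn
    have hx := hBnn n
    have h2 : a * B n + b * (B n) ^ 2 ≤ 1 / 2 := by
      rw [← hξeq]; gcongr
    have h3 := mul_le_mul_of_nonneg_right h2 hx
    have h4 := hrec n
    nlinarith
  have main : ∀ n, B n ≤ ξ ∧ B n ≤ 2 * e + (1 / 2) ^ n * ξ := by
    intro n
    induction n with
    | zero => exact ⟨hB0, by simp; linarith⟩
    | succ k ih =>
      have h := step k ih.1
      refine ⟨by linarith [ih.1], ?_⟩
      rw [pow_succ]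
      linarith [ih.2]
  refine ⟨main, ?_⟩
  have ht : Tendsto (fun n : ℕ => 2 * e + (1 / 2 : ℝ) ^ n * ξ) atTop (nhds (2 * e)) := by
    have := ((tendsto_pow_atTop_nhds_zero_of_lt_one (r := (1 / 2 : ℝ)) (by norm_num)
      (by norm_num)).mul_const ξ).const_add (2 * e)
    simpa using this
  rw [← ht.limsup_eq]
  refine limsup_le_limsup (Eventually.of_forall fun n => (main n).2) ?_ ht.isBoundedUnder_le
  exact IsBoundedUnder.isCoboundedUnder_le ⟨0, by simpa using ⟨0, fun n _ => hBnn n⟩⟩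
end

section
/- Let K > 0 and let d ≥ 1 be a natural number. Define K_d = 2·artanh((tanh(K/2))^d), the output magnitude of a belief-propagation check node of degree d+1 when all d incoming messages have magnitude K. Then K − ln d ≤ K_d ≤ K. -/
open Real

lemma aux_g (t : ℝ) (h0 : 0 ≤ t) (d : ℕ) : 0 ≤ 1 + d * t ^ (d+1) - (d+1) * t ^ d := by
  induction d with
  | zero => simp
  | succ n ih =>
    have h : 0 ≤ ((n:ℝ)+1) * t ^ n * (1-t)^2 := by positivity
    push_cast
    have e : 1 + ((n:ℝ)+1) * t ^ (n+1+1) - (n+1+1) * t ^ (n+1)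
      = (1 + n * t ^ (n+1) - (n+1) * t ^ n) + ((n:ℝ)+1) * t ^ n * (1-t)^2 := by ring
    rw [e]; linarith

lemma aux_f (t : ℝ) (h0 : 0 ≤ t) (h1 : t ≤ 1) (d : ℕ) :
    (1+t) * (1 - t^d) ≤ d * (1-t) * (1 + t^d) := by
  induction d with
  | zero => simp
  | succ n ih =>
    have h := mul_nonneg (sub_nonneg.2 h1) (aux_g t h0 n)
    push_cast
    have e : ((n:ℝ)+1) * (1-t) * (1 + t^(n+1)) - (1+t) * (1 - t^(n+1))
      = (n * (1-t) * (1 + t^n) - (1+t) * (1 - t^n))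
        + (1-t) * (1 + n * t ^ (n+1) - (n+1) * t ^ n) := by ring
    linarith

/-- For `K > 0` and `d ≥ 1`, the check-node output magnitude
`K_d = 2·artanh((tanh(K/2))^d)` satisfies `K - ln d ≤ K_d ≤ K`. -/
theorem checknode_magnitude_bounds (K : ℝ) (hK : 0 < K) (d : ℕ) (hd : 1 ≤ d) :
    K - Real.log d ≤ 2 * _root_.artanh ((Real.tanh (K / 2)) ^ d) ∧
      2 * _root_.artanh ((Real.tanh (K / 2)) ^ d) ≤ K := by
  have hE : 1 < Real.exp K := Real.one_lt_exp_iff.2 hK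
  have ht : Real.tanh (K/2) = (Real.exp K - 1) / (Real.exp K + 1) := by
    rw [Real.tanh_eq, Real.exp_neg]
    have h2 : Real.exp K = Real.exp (K/2) * Real.exp (K/2) := by
      rw [← Real.exp_add]; ring_nf
    have := Real.exp_pos (K/2)
    rw [h2]
    field_simp
  have h0 : 0 < Real.tanh (K/2) := by
    rw [ht]; exact div_pos (by linarith) (by linarith)
  have h1 : Real.tanh (K/2) < 1 := by
    rw [ht, div_lt_one (by linarith)]; linarith
  have hKt : K = Real.log ((1 + Real.tanh (K/2)) / (1 - Real.tanh (K/2))) := by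
    have : (1 + Real.tanh (K/2)) / (1 - Real.tanh (K/2)) = Real.exp K := by
      rw [div_eq_iff (by linarith), ht]
      have : Real.exp K + 1 ≠ 0 := by linarith
      field_simp
      ring
    rw [this, Real.log_exp]
  generalize Real.tanh (K/2) = t at *
  have hp0 : 0 < t ^ d := pow_pos h0 d
  have hp : t ^ d ≤ t := pow_le_of_le_one h0.le h1.le (by omega)
  have hd' : (0:ℝ) < d := by exact_mod_cast hd
  have hf := aux_f t h0.le h1.le d
  have a1 : 0 < 1 - t := by linarith
  have a2 : 0 < 1 - t ^ d := by linarith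
  have hq : 0 < (1 + t^d) / (1 - t^d) := by positivity
  have hr : 0 < (1 + t) / (1 - t) := by positivity
  have e : 2 * _root_.artanh (t ^ d) = Real.log ((1 + t^d) / (1 - t^d)) := by
    unfold _root_.artanh; ring
  rw [e, hKt]
  constructor
  · rw [sub_le_iff_le_add, ← Real.log_mul hq.ne' hd'.ne']
    apply Real.log_le_log hr
    rw [div_mul_eq_mul_div, div_le_div_iff₀ a1 a2]
    linarith
  · apply Real.log_le_log hq
    rw [div_le_div_iff₀ a2 a1]
    nlinarith
end

section
/- Let d ≥ 1 and let K₁,…,K_d > 0. Define K' = 2·artanh(∏_{i=1}^d tanh(K_i/2)), the output magnitude of a belief-propagation check node with incoming message magnitudes K₁,…,K_d. Then K' ≤ min_i K_i and e^{−K'} ≤ ∑_{i=1}^d e^{−K_i}. -/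
open Real Finset

lemma tanh_half_eq (k : ℝ) :
    Real.tanh (k / 2) = (1 - Real.exp (-k)) / (1 + Real.exp (-k)) := by
  have h : Real.exp (-k) = Real.exp (-(k/2)) * Real.exp (-(k/2)) := by
    rw [← Real.exp_add]; ring_nf
  have h2 : Real.exp (k/2) * Real.exp (-(k/2)) = 1 := by
    rw [← Real.exp_add]; simp
  have p1 := Real.exp_pos (k/2)
  have p2 := Real.exp_pos (-(k/2))
  rw [Real.tanh_eq_sinh_div_cosh, Real.sinh_eq, Real.cosh_eq, h]
  rw [div_eq_div_iff (by positivity) (by positivity)]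
  generalize Real.exp (k/2) = a at *
  generalize Real.exp (-(k/2)) = b at *
  linear_combination b * h2

lemma prod_bound {ι : Type*} (s : Finset ι) (x : ι → ℝ) (h0 : ∀ i, 0 < x i)
    (h1 : ∀ i, x i < 1) :
    1 - ∑ i ∈ s, x i ≤ (∏ i ∈ s, (1 - x i) / (1 + x i)) * (1 + ∑ i ∈ s, x i) := by
  classical
  induction s using Finset.induction_on with
  | empty => simp
  | insert a s ha ih =>
    rw [Finset.sum_insert ha, Finset.prod_insert ha]
    have hS : 0 ≤ ∑ i ∈ s, x i := Finset.sum_nonneg fun i _ => (h0 i).le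
    have hP : 0 ≤ ∏ i ∈ s, (1 - x i) / (1 + x i) := Finset.prod_nonneg fun i _ =>
      div_nonneg (by linarith [h1 i]) (by linarith [h0 i])
    have hx0 := h0 a
    have hx1 := h1 a
    generalize ∑ i ∈ s, x i = S at *
    generalize ∏ i ∈ s, (1 - x i) / (1 + x i) = P at *
    generalize x a = y at *
    rw [div_mul_eq_mul_div, div_mul_eq_mul_div, le_div_iff₀ (by linarith)]
    have key : (1 - (y + S)) * (1 + y) * (1 + S) ≤ (1 - y) * (1 + (y + S)) * (1 - S) := by
      have : 0 ≤ y * S * (y + S) := by positivity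
      nlinarith
    have h3 : (1 - y) * (1 + (y + S)) * (1 - S) ≤ (1 - y) * (1 + (y + S)) * (P * (1 + S)) :=
      mul_le_mul_of_nonneg_left ih (mul_nonneg (by linarith) (by linarith))
    have h4 : 0 < 1 + S := by linarith
    refine le_of_mul_le_mul_right ?_ h4
    linarith

/-- For positive incoming magnitudes `K₁,…,K_d`, the check-node output magnitude
`K' = 2·artanh(∏ᵢ tanh(Kᵢ/2))` satisfies `K' ≤ min_i K_i` and
`e^{-K'} ≤ ∑ᵢ e^{-K_i}`. -/
theorem checknode_magnitude_general (d : ℕ) (hd : 1 ≤ d) (K : Fin d → ℝ)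
    (hK : ∀ i, 0 < K i) :
    (∀ i, 2 * _root_.artanh (∏ i, Real.tanh (K i / 2)) ≤ K i) ∧
      Real.exp (-(2 * _root_.artanh (∏ i, Real.tanh (K i / 2))))
        ≤ ∑ i, Real.exp (-(K i)) := by
  simp only [tanh_half_eq]
  have h0 : ∀ i, 0 < Real.exp (-(K i)) := fun i => Real.exp_pos _
  have h1 : ∀ i, Real.exp (-(K i)) < 1 := fun i => by
    rw [Real.exp_lt_one_iff]; linarith [hK i]
  have hb := prod_bound Finset.univ (fun i => Real.exp (-(K i))) h0 h1
  have t0 : ∀ i, 0 < (1 - Real.exp (-(K i))) / (1 + Real.exp (-(K i))) := fun i =>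
    div_pos (by linarith [h1 i]) (by linarith [h0 i])
  have t1 : ∀ i, (1 - Real.exp (-(K i))) / (1 + Real.exp (-(K i))) < 1 := fun i => by
    rw [div_lt_one (by linarith [h0 i])]; linarith [h0 i]
  have hP0 : 0 < ∏ i, (1 - Real.exp (-(K i))) / (1 + Real.exp (-(K i))) :=
    Finset.prod_pos fun i _ => t0 i
  have hPle : ∀ j, ∏ i, (1 - Real.exp (-(K i))) / (1 + Real.exp (-(K i))) ≤
      (1 - Real.exp (-(K j))) / (1 + Real.exp (-(K j))) := fun j => by
    rw [← Finset.mul_prod_erase _ _ (Finset.mem_univ j)]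
    exact mul_le_of_le_one_right (t0 j).le
      (Finset.prod_le_one (fun i _ => (t0 i).le) (fun i _ => (t1 i).le))
  have hP1 := (hPle ⟨0, hd⟩).trans_lt (t1 ⟨0, hd⟩)
  generalize ∏ i, (1 - Real.exp (-(K i))) / (1 + Real.exp (-(K i))) = P at *
  have e : 2 * _root_.artanh P = Real.log ((1 + P) / (1 - P)) := by
    unfold _root_.artanh; ring
  have hq : 0 < (1 + P) / (1 - P) := div_pos (by linarith) (by linarith)
  rw [e]
  constructor
  · intro i
    rw [Real.log_le_iff_le_exp hq, div_le_iff₀ (by linarith)]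
    have h := hPle i
    rw [le_div_iff₀ (by linarith [h0 i])] at h
    have hm : Real.exp (K i) * Real.exp (-(K i)) = 1 := by rw [← Real.exp_add]; simp
    have := mul_le_mul_of_nonneg_left h (Real.exp_pos (K i)).le
    linear_combination this + (P + 1) * (-hm)
  · rw [Real.exp_neg, Real.exp_log hq, inv_div, div_le_iff₀ (by linarith)]
    linarith
end
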